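/- Let D be an integral domain and ⋆ a stable semistar operation on D (i.e., (E ∩ F)^⋆ = E^⋆ ∩ F^⋆ for all nonzero D-submodules E, F of K). Then D is ⋆-Noetherian if and only if D^⋆ is ⋆̇-Noetherian, where ⋆̇ is the semistar operation on the overring T := D^⋆ obtained by restricting ⋆ to nonzero T-submodules of K. -/

import Mathlib

open scoped Pointwise

section SemistarDefs

variable {D : Type*} [CommRing D] [IsDomain D]
variable {K : Type*} [Field K] [Algebra D K] [IsFractionRing D K]

/-- `star` is a semistar operation on the integral domain `D` with quotient field `K`:
a map on (nonzero) `D`-submodules of `K` satisfying `(xE)^⋆ = x·E^⋆`, monotonicity,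
extensivity and idempotence. -/
structure IsSemistarOperation (star : Submodule D K → Submodule D K) : Prop where
  ne_bot : ∀ {E : Submodule D K}, E ≠ ⊥ → star E ≠ ⊥
  map_smul : ∀ (x : K), x ≠ 0 → ∀ {E : Submodule D K}, E ≠ ⊥ →
    star (Submodule.map (LinearMap.mulLeft D x) E) = Submodule.map (LinearMap.mulLeft D x) (star E)
  mono : ∀ {E F : Submodule D K}, E ≠ ⊥ → F ≠ ⊥ → E ≤ F → star E ≤ star F
  le_star : ∀ {E : Submodule D K}, E ≠ ⊥ → E ≤ star E
  star_star : ∀ {E : Submodule D K}, E ≠ ⊥ → star (star E) = star E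

/-- The image in `K` of an ideal `I` of `D`, as a `D`-submodule of `K`. -/
def idealExt (K : Type*) [Field K] [Algebra D K] (I : Ideal D) : Submodule D K :=
  Submodule.map (Algebra.linearMap D K) I

/-- `I` is a quasi-⋆-ideal: a nonzero ideal of `D` with `I = I^⋆ ∩ D`. -/
def QuasiStarIdeal (star : Submodule D K → Submodule D K) (I : Ideal D) : Prop :=
  I ≠ ⊥ ∧ Submodule.comap (Algebra.linearMap D K) (star (idealExt K I)) = I

/-- `P` is a quasi-⋆-prime: a prime ideal which is a quasi-⋆-ideal. -/
def QuasiStarPrime (star : Submodule D K → Submodule D K) (P : Ideal D) : Prop :=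
  P.IsPrime ∧ QuasiStarIdeal star P

/-- `M` is a quasi-⋆-maximal ideal: maximal in the set of proper quasi-⋆-ideals of `D`. -/
def QuasiStarMaximal (star : Submodule D K → Submodule D K) (M : Ideal D) : Prop :=
  QuasiStarIdeal star M ∧ M ≠ ⊤ ∧
    ∀ J : Ideal D, QuasiStarIdeal star J → J ≠ ⊤ → M ≤ J → J = M

/-- The finite-type semistar operation `⋆_f` associated to `⋆`:
`E^{⋆_f} = ⋃ { F^⋆ : F nonzero finitely generated, F ⊆ E }`. -/
def finTypeOp (star : Submodule D K → Submodule D K) : Submodule D K → Submodule D K :=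
  fun E => ⨆ (F : Submodule D K) (_ : F ≠ ⊥) (_ : F.FG) (_ : F ≤ E), star F

/-- The extension `E·D_Q` of a `D`-submodule `E` of `K` to the localization of `D` at
(the complement of) `Q`, described as `{ x ∈ K : s·x ∈ E for some s ∉ Q }`. -/
def extendToPrime (Q : Ideal D) (E : Submodule D K) : Submodule D K :=
  Submodule.span D {x : K | ∃ s : D, s ∉ Q ∧ algebraMap D K s * x ∈ E}

/-- The stable semistar operation of finite type `⋆̃` associated to `⋆`:
`E^⋆̃ = ⋂ { E·D_Q : Q a quasi-⋆_f-maximal ideal of D }`. -/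
def stableOp (star : Submodule D K → Submodule D K) : Submodule D K → Submodule D K :=
  fun E => ⨅ (Q : Ideal D) (_ : QuasiStarMaximal (finTypeOp star) Q), extendToPrime Q E

/-- A rank-one discrete valuation ring: a (domain which is a) local PID which is not a field. -/
def IsDVR (R : Type*) [CommRing R] : Prop :=
  ∃ h : IsDomain R, @IsDiscreteValuationRing R _ h

/-- A valuation domain. -/
def IsValuationDomain (R : Type*) [CommRing R] : Prop :=
  ∃ h : IsDomain R, @ValuationRing R _ h

/-- `D` is a ⋆-almost Dedekind domain: `D_M` is a rank-one discrete valuation ring for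
every quasi-⋆_f-maximal ideal `M` of `D`. -/
def StarADD (star : Submodule D K → Submodule D K) : Prop :=
  ∀ (M : Ideal D) [M.IsPrime], QuasiStarMaximal (finTypeOp star) M →
    IsDVR (Localization.AtPrime M)

/-- `D` is a Prüfer ⋆-multiplication domain: `D_M` is a valuation domain for every
quasi-⋆_f-maximal ideal `M` of `D`. -/
def StarPMD (star : Submodule D K → Submodule D K) : Prop :=
  ∀ (M : Ideal D) [M.IsPrime], QuasiStarMaximal (finTypeOp star) M →
    IsValuationDomain (Localization.AtPrime M)

/-- `D` is ⋆-Noetherian: ascending chain condition on quasi-⋆-ideals. -/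
def StarNoetherian (star : Submodule D K → Submodule D K) : Prop :=
  ∀ c : ℕ →o Ideal D, (∀ n, QuasiStarIdeal star (c n)) → ∃ n, ∀ m, n ≤ m → c m = c n

/-- `D` is a ⋆-Dedekind domain: ⋆-Noetherian and a P⋆MD. -/
def StarDedekind (star : Submodule D K → Submodule D K) : Prop :=
  StarNoetherian star ∧ StarPMD star

/-- `D` has the ⋆_f-finite character property: every nonzero element of `D` lies in only
finitely many quasi-⋆_f-maximal ideals. -/
def StarFiniteCharacter (star : Submodule D K → Submodule D K) : Prop :=
  ∀ d : D, d ≠ 0 → {M : Ideal D | QuasiStarMaximal (finTypeOp star) M ∧ d ∈ M}.Finite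

/-- The `v`-operation `E ↦ (D : (D : E))`. -/
def vOp : Submodule D K → Submodule D K := fun E => 1 / (1 / E)

/-- A nonzero `D`-submodule `E` of `K` is quasi-∗-invertible if `(E·(D^∗ : E))^∗ = D^∗`. -/
def QuasiStarInvertible (star : Submodule D K → Submodule D K) (E : Submodule D K) : Prop :=
  star (E * (star 1 / E)) = star (1 : Submodule D K)

/-- `D` has the ∗-cancellation law: for nonzero fractional ideals `A`, `B`, `C`,
`(AB)^∗ = (AC)^∗` implies `B^∗ = C^∗`. -/
def StarCancellation (star : Submodule D K → Submodule D K) : Prop :=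
  ∀ A B C : Submodule D K, A ≠ ⊥ → B ≠ ⊥ → C ≠ ⊥ →
    IsFractional (nonZeroDivisors D) A → IsFractional (nonZeroDivisors D) B →
    IsFractional (nonZeroDivisors D) C →
    star (A * B) = star (A * C) → star B = star C

/-- The ∗-dimension of `D`: the supremum of the lengths of chains of quasi-∗-prime ideals
of `D` (between `(0)` and a quasi-∗-prime). -/
noncomputable def starDim (star : Submodule D K → Submodule D K) : ℕ∞ :=
  ⨆ (k : ℕ) (_ : ∃ c : Fin k → Ideal D, StrictMono c ∧ ∀ i, QuasiStarPrime star (c i)),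
    (k : ℕ∞)

/-- A submodule `T` of `K` (containing the image of an integral domain with quotient
field `K`) is integrally closed (in `K`) if every `x ∈ K` satisfying a monic polynomial
equation with coefficients in `T` belongs to `T`. -/
def IntegrallyClosedSub (T : Submodule D K) : Prop :=
  ∀ x : K, (∃ (n : ℕ) (c : Fin n → K), (∀ i, c i ∈ T) ∧
    x ^ n = ∑ i : Fin n, c i * x ^ (i : ℕ)) → x ∈ T

/-- The content ideal `c(p)` of a polynomial: the ideal generated by its coefficients. -/
def contentIdeal (p : Polynomial D) : Ideal D := Ideal.span (Set.range p.coeff)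

/-- The multiplicative set `N(⋆) = { h ∈ D[X] : h ≠ 0, c(h)^⋆ = D^⋆ }` (as a submonoid,
via the closure of this multiplicatively closed set). -/
noncomputable def nagataMonoid (star : Submodule D K → Submodule D K) : Submonoid (Polynomial D) :=
  Submonoid.closure
    {p : Polynomial D | p ≠ 0 ∧ star (idealExt K (contentIdeal p)) = star (1 : Submodule D K)}

/-- The Nagata ring `Na(D,⋆) = D[X]_{N(⋆)}`. -/
abbrev NagataRing (star : Submodule D K → Submodule D K) :=
  Localization (nagataMonoid star)

/-- `V` is a valuation overring of `D` (inside the quotient field `K`): `D ⊆ V ⊆ K` and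
for every nonzero `x ∈ K`, `x ∈ V` or `x⁻¹ ∈ V`. -/
def IsValuationOverring (D : Type*) [CommRing D] {K : Type*} [Field K] [Algebra D K]
    (V : Subring K) : Prop :=
  (∀ d : D, algebraMap D K d ∈ V) ∧ ∀ x : K, x ≠ 0 → (x ∈ V ∨ x⁻¹ ∈ V)

/-- `V` is a ∗-valuation overring of `D`: a valuation overring such that `F^∗ ⊆ FV` for
every nonzero finitely generated `D`-submodule `F` of `K`. -/
def IsStarValuationOverring (star : Submodule D K → Submodule D K) (V : Subring K) : Prop :=
  IsValuationOverring D V ∧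
    ∀ F : Submodule D K, F ≠ ⊥ → F.FG →
      star F ≤ Submodule.span D ((F : Set K) * (V : Set K))

/-- `D` is a Krull domain: there is a family of rank-one discrete valuation overrings of `D`
with quotient field `K` whose intersection is `D`, with finite character. -/
def IsKrullDomain (D : Type*) [CommRing D] (K : Type*) [Field K] [Algebra D K] : Prop :=
  ∃ 𝒱 : Set (Subring K),
    (∀ V ∈ 𝒱, (∀ d : D, algebraMap D K d ∈ V) ∧ IsDVR V ∧
      ∀ x : K, ∃ a ∈ V, ∃ b ∈ V, b ≠ 0 ∧ x * b = a) ∧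
    (⋂ V ∈ 𝒱, (V : Set K)) = Set.range (algebraMap D K) ∧
    ∀ d : D, d ≠ 0 → {V ∈ 𝒱 | ¬ ∃ y ∈ V, algebraMap D K d * y = 1}.Finite

end SemistarDefs

section Statement

variable {D : Type*} [CommRing D] [IsDomain D]
variable {K : Type*} [Field K] [Algebra D K] [IsFractionRing D K]

/-!
For every semistar operation, `I ↦ I^⋆` embeds the quasi-⋆-ideals of `D` into the quasi-⋆̇-ideals
of `T = D^⋆`, because `I = I^⋆ ∩ D` recovers `I`. The quasi-⋆̇-ideals of `T` are the nonzero
⋆-closed submodules `J` of `T`, and such a `J` is in the image as soon as `(J ∩ D)^⋆ = J`;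
stability gives this, since `(J ∩ D)^⋆ = J^⋆ ∩ D^⋆ = J`. The two ascending chain conditions are
then the same condition on isomorphic ordered sets.
-/

theorem wellFoundedGT_subtype_iff_monotone_chain_condition {α : Type*} [PartialOrder α]
    {p : α → Prop} :
    WellFoundedGT {a // p a} ↔
      ∀ c : ℕ →o α, (∀ n, p (c n)) → ∃ n, ∀ m, n ≤ m → c m = c n := by
  rw [wellFoundedGT_iff_monotone_chain_condition]
  constructor
  · intro h c hc
    obtain ⟨n, hn⟩ := h ⟨fun k => ⟨c k, hc k⟩, fun _ _ hij => c.monotone hij⟩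
    exact ⟨n, fun m hm => congrArg Subtype.val (hn m hm).symm⟩
  · intro h c
    obtain ⟨n, hn⟩ := h ((OrderHom.Subtype.val p).comp c) fun k => (c k).2
    exact ⟨n, fun m hm => Subtype.ext (hn m hm).symm⟩

theorem comap_linearMap_ne_bot_of_isLocalization {R S : Type*} [CommRing R] [CommRing S]
    [Algebra R S] (M : Submonoid R) [IsLocalization M S] {J : Submodule R S} (hJ : J ≠ ⊥) :
    J.comap (Algebra.linearMap R S) ≠ ⊥ := by
  obtain ⟨y, hyJ, hy⟩ := Submodule.exists_mem_ne_zero_of_ne_bot hJ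
  obtain ⟨⟨a, b⟩, hab⟩ := IsLocalization.surj M y
  have haJ : algebraMap R S a ∈ J := by
    rw [← hab, mul_comm, ← Algebra.smul_def]
    exact J.smul_mem b hyJ
  refine (Submodule.ne_bot_iff _).2 ⟨a, haJ, ?_⟩
  rintro rfl
  rw [map_zero, (IsLocalization.map_units S b).mul_left_eq_zero] at hab
  exact hy hab

section Overring

omit [IsDomain D] [IsFractionRing D K]

theorem idealExt_le_one (I : Ideal D) : idealExt K I ≤ 1 := by
  rw [Submodule.one_eq_range]
  exact LinearMap.map_le_range

theorem idealExt_comap (J : Submodule D K) :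
    idealExt K (J.comap (Algebra.linearMap D K)) = J ⊓ 1 := by
  rw [idealExt, Submodule.map_comap_eq, Submodule.one_eq_range, inf_comm]

theorem idealExt_ne_bot [FaithfulSMul D K] {I : Ideal D} (hI : I ≠ ⊥) : idealExt K I ≠ ⊥ := by
  contrapose! hI
  exact Submodule.map_injective_of_injective (FaithfulSMul.algebraMap_injective D K)
    (hI.trans (Submodule.map_bot _).symm)

/-- `J` is a quasi-⋆̇-ideal of the overring `T = D^⋆`: a nonzero ideal of `T` with
`J = J^⋆ ∩ T`. Ideals of `T` are encoded as `D`-submodules of `K` contained in `T` and closed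
under multiplication by `T`. -/
def QuasiStarOverringIdeal (star : Submodule D K → Submodule D K) (J : Submodule D K) : Prop :=
  J ≠ ⊥ ∧ J ≤ star (1 : Submodule D K) ∧
    (∀ t ∈ star (1 : Submodule D K), ∀ j ∈ J, t * j ∈ J) ∧
    star J ⊓ star (1 : Submodule D K) = J

namespace IsSemistarOperation

variable {star : Submodule D K → Submodule D K} (hstar : IsSemistarOperation star)
include hstar

theorem star_le_star_iff {E F : Submodule D K} (hE : E ≠ ⊥) (hF : F ≠ ⊥) :
    star E ≤ star F ↔ E ≤ star F :=
  ⟨(hstar.le_star hE).trans,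
    fun h => (hstar.mono hE (hstar.ne_bot hF) h).trans (hstar.star_star hF).le⟩

theorem mul_mem_star {E : Submodule D K} (hE : E ≠ ⊥) {t x : K}
    (ht : t ∈ star (1 : Submodule D K)) (hx : x ∈ star E) : t * x ∈ star E := by
  obtain rfl | hx0 := eq_or_ne x 0
  · simp only [mul_zero, zero_mem]
  have map_one : (1 : Submodule D K).map (LinearMap.mulLeft D x) = D ∙ x := by
    simp only [Submodule.one_eq_span, Submodule.map_span, Set.image_singleton,
      LinearMap.mulLeft_apply, mul_one]
  have map_star_one_le : (star 1).map (LinearMap.mulLeft D x) ≤ star E := by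
    rw [← hstar.map_smul x hx0 one_ne_zero, map_one,
      hstar.star_le_star_iff (Submodule.span_singleton_eq_bot.not.2 hx0) hE]
    exact (Submodule.span_singleton_le_iff_mem _ _).2 hx
  exact mul_comm x t ▸ map_star_one_le (Submodule.mem_map_of_mem ht)

theorem quasiStarOverringIdeal_iff {J : Submodule D K} :
    QuasiStarOverringIdeal star J ↔ J ≠ ⊥ ∧ J ≤ star 1 ∧ star J = J := by
  constructor
  · rintro ⟨hJ, hJ_le, -, hJ_eq⟩
    have star_le : star J ≤ star 1 := (hstar.star_le_star_iff hJ one_ne_zero).2 hJ_le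
    exact ⟨hJ, hJ_le, by rwa [inf_eq_left.2 star_le] at hJ_eq⟩
  · rintro ⟨hJ, hJ_le, hJ_star⟩
    refine ⟨hJ, hJ_le, fun t ht x hx => ?_, by rwa [hJ_star, inf_eq_left]⟩
    rw [← hJ_star] at hx ⊢
    exact hstar.mul_mem_star hJ ht hx

theorem quasiStarOverringIdeal_star {E : Submodule D K} (hE : E ≠ ⊥) (hE_le : E ≤ 1) :
    QuasiStarOverringIdeal star (star E) :=
  hstar.quasiStarOverringIdeal_iff.2
    ⟨hstar.ne_bot hE, hstar.mono hE one_ne_zero hE_le, hstar.star_star hE⟩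

theorem star_idealExt_le_star_idealExt_iff [FaithfulSMul D K] {I J : Ideal D}
    (hI : I ≠ ⊥) (hJ : QuasiStarIdeal star J) :
    star (idealExt K I) ≤ star (idealExt K J) ↔ I ≤ J := by
  rw [hstar.star_le_star_iff (idealExt_ne_bot hI) (idealExt_ne_bot hJ.1), idealExt,
    Submodule.map_le_iff_le_comap, hJ.2]

/-- The order embedding `I ↦ I^⋆` of the quasi-⋆-ideals of `D` into the quasi-⋆̇-ideals of the
overring `D^⋆`, along which the ascending chain condition is transferred. -/
def quasiStarIdealEmbedding [FaithfulSMul D K] :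
    {I : Ideal D // QuasiStarIdeal star I} ↪o
      {J : Submodule D K // QuasiStarOverringIdeal star J} :=
  OrderEmbedding.ofMapLEIff
    (fun I => ⟨star (idealExt K I),
      hstar.quasiStarOverringIdeal_star (idealExt_ne_bot I.2.1) (idealExt_le_one I.1)⟩)
    fun I J => hstar.star_idealExt_le_star_idealExt_iff I.2.1 J.2

theorem quasiStarIdealEmbedding_surjective [IsFractionRing D K]
    (hcontract : ∀ J : Submodule D K, J ≠ ⊥ → J ≤ star 1 → star J = J → star (J ⊓ 1) = J) :
    Function.Surjective hstar.quasiStarIdealEmbedding := by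
  rintro ⟨J, hJ⟩
  obtain ⟨hJ_ne, hJ_le, hJ_star⟩ := hstar.quasiStarOverringIdeal_iff.1 hJ
  have star_contraction : star (idealExt K (J.comap (Algebra.linearMap D K))) = J := by
    rw [idealExt_comap, hcontract J hJ_ne hJ_le hJ_star]
  exact ⟨⟨J.comap (Algebra.linearMap D K),
    comap_linearMap_ne_bot_of_isLocalization (nonZeroDivisors D) hJ_ne,
    by rw [star_contraction]⟩, Subtype.ext star_contraction⟩

end IsSemistarOperation

end Overring

omit [IsDomain D] in
/-- Besides the stable case, `hcontract` covers every `⋆` with `D^⋆ = D`, for instance the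
`v`-operation, which need not be stable. -/
theorem starNoetherian_iff_overring_noetherian_of_stable_general
    (star : Submodule D K → Submodule D K) (hstar : IsSemistarOperation star)
    (hcontract : ∀ J : Submodule D K, J ≠ ⊥ → J ≤ star 1 → star J = J → star (J ⊓ 1) = J) :
    StarNoetherian star ↔
      ∀ c : ℕ →o Submodule D K,
        (∀ n, c n ≠ ⊥ ∧ c n ≤ star (1 : Submodule D K) ∧
          (∀ t ∈ star (1 : Submodule D K), ∀ j ∈ c n, t * j ∈ c n) ∧
          star (c n) ⊓ star (1 : Submodule D K) = c n) →
        ∃ n, ∀ m, n ≤ m → c m = c n := by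
  have e : {I : Ideal D // QuasiStarIdeal star I} ≃o
      {J : Submodule D K // QuasiStarOverringIdeal star J} :=
    RelIso.ofSurjective _ (hstar.quasiStarIdealEmbedding_surjective hcontract)
  calc StarNoetherian star
      ↔ WellFoundedGT {I : Ideal D // QuasiStarIdeal star I} :=
        wellFoundedGT_subtype_iff_monotone_chain_condition.symm
    _ ↔ WellFoundedGT {J : Submodule D K // QuasiStarOverringIdeal star J} :=
        ⟨fun _ => e.symm.toOrderEmbedding.wellFoundedGT, fun _ => e.toOrderEmbedding.wellFoundedGT⟩
    _ ↔ _ := wellFoundedGT_subtype_iff_monotone_chain_condition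

/-- `D` an integral domain, `⋆` a stable semistar operation on `D`. Then
`D` is ⋆-Noetherian iff `D^⋆` is `⋆̇`-Noetherian, `⋆̇` being the restriction of `⋆` to the
(nonzero) `D^⋆`-submodules of `K`; i.e. iff the ascending chain condition holds for the
nonzero ideals `J` of the overring `T := D^⋆` (the `D`-submodules of `K` contained in `T`
and stable under multiplication by elements of `T`) satisfying `J = J^⋆ ∩ T`. -/
theorem starNoetherian_iff_overring_noetherian_of_stable
    (star : Submodule D K → Submodule D K) (hstar : IsSemistarOperation star)
    (hstable : ∀ E F : Submodule D K, E ≠ ⊥ → F ≠ ⊥ → star (E ⊓ F) = star E ⊓ star F) :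
    StarNoetherian star ↔
      ∀ c : ℕ →o Submodule D K,
        (∀ n, c n ≠ ⊥ ∧ c n ≤ star (1 : Submodule D K) ∧
          (∀ t ∈ star (1 : Submodule D K), ∀ j ∈ c n, t * j ∈ c n) ∧
          star (c n) ⊓ star (1 : Submodule D K) = c n) →
        ∃ n, ∀ m, n ≤ m → c m = c n :=
  starNoetherian_iff_overring_noetherian_of_stable_general star hstar fun J hJ hJ_le hJ_star => by
    rw [hstable J 1 hJ one_ne_zero, hJ_star, inf_eq_left.2 hJ_le]

end Statement
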